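/- arXiv:1008.4548 — 2 statements merged into one kernel-verified Lean document; each statement's English description precedes it below -/
import Mathlib

section
/- There is a constant c > 0 such that for every n ≥ 2, every finite traceable graph with at least t_{c⌈log₂ n⌉}(2) vertices either contains a subgraph isomorphic to K_{2,2} or contains a chordless n-path, where the tower function is defined by t₁(x) = x and t_k(x) = 2^{t_{k−1}(x)} for k > 1. -/
/-- `G` contains a chordless path on `n` vertices: `n` distinct vertices
`v 0, …, v (n-1)` where `v i` and `v j` are adjacent iff `|i - j| = 1`. -/
def HasChordlessPath {V : Type*} (G : SimpleGraph V) (n : ℕ) : Prop :=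
  ∃ v : Fin n → V, Function.Injective v ∧
    ∀ i j : Fin n, G.Adj (v i) (v j) ↔ ((i : ℕ) + 1 = (j : ℕ) ∨ (j : ℕ) + 1 = (i : ℕ))

/-- `G` contains a subgraph isomorphic to `H`. -/
def ContainsCopy {V W : Type*} (G : SimpleGraph V) (H : SimpleGraph W) : Prop :=
  ∃ g : W → V, Function.Injective g ∧ ∀ x y : W, H.Adj x y → G.Adj (g x) (g y)

/-- A finite graph on vertex type `V` is traceable: there is a bijection
`T : Fin (card V) ≃ V` with consecutive vertices adjacent. -/
def FinTraceable {V : Type*} [Fintype V] (G : SimpleGraph V) : Prop :=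
  ∃ T : Fin (Fintype.card V) ≃ V, ∀ (i : ℕ) (h : i + 1 < Fintype.card V),
    G.Adj (T ⟨i, Nat.lt_of_succ_lt h⟩) (T ⟨i + 1, h⟩)

/-- The tower function: `tower 1 x = x` and `tower k x = 2 ^ tower (k-1) x` for `k > 1`. -/
def tower : ℕ → ℕ → ℕ
  | 0, x => x
  | 1, x => x
  | (k + 2), x => 2 ^ tower (k + 1) x

/-!
Suppose a graph with a Hamiltonian path has no chordless `n`-path. A shortest walk inside an
induced subgraph is chordless, so any two vertices `a`, `b` are joined by a walk `w a b` on fewer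
than `n` vertices that stays between them along the Hamiltonian path. Colour `a < b < c < d` by a
pair `(s, t)` such that the `s`-th vertex of `w a b` is adjacent to the `t`-th vertex of `w c d`,
or by `none` if there is no such pair, and apply Ramsey's theorem for quadruples. On a homogeneous
set of colour `(s, t)`, eight points yield a `K_{2,2}`. On a homogeneous set of colour `none`, the
walks between consecutive points are pairwise nonadjacent unless they share an endpoint, so a
shortest walk through their union has to pass through them one at a time, and is long. The Ramsey
number is a tower of bounded height over `n ^ 2 + 4`, since each of the four steps down from
quadruples costs four exponentials.
-/

open Finset SimpleGraph

section Tower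

theorem tower_succ_eq_iterate (k x : ℕ) : tower (k + 1) x = (2 ^ ·)^[k] x := by
  induction k with
  | zero => rfl
  | succ k ih => rw [Function.iterate_succ_apply', ← ih, tower]

theorem tower_tower (j k x : ℕ) : tower (j + 1) (tower (k + 1) x) = tower (j + k + 1) x := by
  simp only [tower_succ_eq_iterate, Function.iterate_add_apply]

theorem tower_mono_right (k : ℕ) : Monotone (tower (k + 1)) := by
  have pow_mono : Monotone (2 ^ · : ℕ → ℕ) := pow_right_mono₀ one_le_two
  simpa only [funext (tower_succ_eq_iterate k)] using pow_mono.iterate k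

theorem tower_mono_left (x : ℕ) : Monotone fun k ↦ tower (k + 1) x := by
  have id_le_pow : id ≤ (2 ^ · : ℕ → ℕ) := fun _ ↦ Nat.lt_two_pow_self.le
  simp only [tower_succ_eq_iterate]
  exact fun _ _ h ↦ Function.monotone_iterate_of_id_le id_le_pow h x

theorem le_tower (k x : ℕ) : x ≤ tower (k + 1) x :=
  tower_mono_left x k.zero_le

theorem add_le_tower (k x : ℕ) : x + k ≤ tower (k + 1) x := by
  induction k with
  | zero => rfl
  | succ k ih => exact (Nat.succ_le_succ ih).trans Nat.lt_two_pow_self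

theorem pow_four_pow_le_tower_five {r M : ℕ} (hr : 2 ≤ r) (hrM : r ≤ M) :
    r ^ 4 ^ M ≤ tower 5 M := by
  have two_mul_le : 2 * M ≤ 2 ^ M := by
    obtain ⟨m, rfl⟩ := Nat.exists_eq_add_of_le' (hr.trans hrM)
    have : m + 1 < 2 ^ (m + 1) := Nat.lt_two_pow_self
    rw [pow_succ]
    omega
  have three_mul_le : 3 * M ≤ 2 ^ 2 ^ M := calc
    3 * M ≤ 2 ^ M * 2 := by omega
    _ = 2 ^ (M + 1) := (pow_succ 2 M).symm
    _ ≤ 2 ^ 2 ^ M := Nat.pow_le_pow_right two_pos Nat.lt_two_pow_self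
  calc
    r ^ 4 ^ M ≤ (2 ^ M) ^ 4 ^ M := Nat.pow_le_pow_left (hrM.trans Nat.lt_two_pow_self.le) _
    _ = 2 ^ (M * 4 ^ M) := (pow_mul _ _ _).symm
    _ ≤ 2 ^ (2 ^ M * 4 ^ M) := by gcongr <;> [norm_num; exact Nat.lt_two_pow_self.le]
    _ = 2 ^ 2 ^ (3 * M) := by rw [← mul_pow, pow_mul]; norm_num
    _ ≤ 2 ^ 2 ^ 2 ^ 2 ^ M := by gcongr <;> norm_num

theorem tower_seventeen_le_tower_clog {n : ℕ} (hn : 2 ≤ n) :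
    tower 17 (n ^ 2 + 4) ≤ tower (20 * Nat.clog 2 n) 2 := by
  have clog_pos : 0 < Nat.clog 2 n := Nat.clog_pos one_lt_two hn
  have le_pow_clog : n ≤ 2 ^ Nat.clog 2 n := Nat.le_pow_clog one_lt_two n
  generalize Nat.clog 2 n = L at *
  have le_tower_two : n ^ 2 + 4 ≤ tower (2 * L + 2) 2 := calc
    n ^ 2 + 4 ≤ 2 * n ^ 2 := by nlinarith
    _ ≤ 2 * (2 ^ L) ^ 2 := by gcongr
    _ = 2 ^ (2 * L + 1) := by ring
    _ ≤ tower (2 * L + 2) 2 := Nat.pow_le_pow_right two_pos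
      ((by omega : 2 * L + 1 ≤ 2 + 2 * L).trans (add_le_tower (2 * L) 2))
  calc
    tower 17 (n ^ 2 + 4) ≤ tower 17 (tower (2 * L + 2) 2) := tower_mono_right 16 le_tower_two
    _ = tower (16 + (2 * L + 1) + 1) 2 := tower_tower 16 (2 * L + 1) 2
    _ ≤ tower (20 * L - 1 + 1) 2 := tower_mono_left 2 (by omega)
    _ = tower (20 * L) 2 := by rw [Nat.sub_add_cancel (by omega)]

end Tower

section Ramsey

variable {α C : Type*} [LinearOrder α]

/-- Erdős–Rado end-homogeneity: on nonempty subsets of `H`, the colouring `f` of finite sets is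
unchanged when the maximum is replaced, and `g` is the colouring of the sets with their maximum
removed that `f` induces. -/
def IsEndHomogeneous (f g : Finset α → C) (H : Finset α) : Prop :=
  ∀ T ⊆ H, ∀ x ∈ H, (∀ t ∈ T, t < x) → f (insert x T) = g T

theorem IsEndHomogeneous.exists_insert_min {f : Finset α → C} {g : Finset α → C × C}
    {H : Finset α} {a : α} {c : C} (hg : IsEndHomogeneous (fun T ↦ (f T, f (insert a T))) g H)
    (ha : ∀ x ∈ H, a < x) (hc : ∀ x ∈ insert a H, f {x} = c) :
    ∃ f', IsEndHomogeneous f f' (insert a H) := by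
  refine ⟨fun T ↦ if T = ∅ then c else if a ∈ T then (g (T.erase a)).2 else (g T).1,
    fun T hT x hx hTx ↦ ?_⟩
  rcases T.eq_empty_or_nonempty with rfl | hne
  · simpa using hc x hx
  have hxH : x ∈ H := by
    obtain ⟨t, ht⟩ := hne
    refine mem_of_mem_insert_of_ne hx fun hxa ↦ ?_
    rcases mem_insert.1 (hT ht) with rfl | htH
    · exact (hTx t ht).ne' hxa
    · exact ((ha t htH).trans (hTx t ht)).ne' hxa
  simp only [hne.ne_empty, if_false]
  split_ifs with haT
  · rw [← hg (T.erase a) (subset_insert_iff.1 hT) x hxH fun t ht ↦ hTx t (mem_of_mem_erase ht)]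
    simp only [insert_comm a x, insert_erase haT]
  · rw [← hg T ((subset_insert_iff_of_notMem haT).1 hT) x hxH hTx]

theorem mul_succ_le_pow_four_pow_succ {r : ℕ} (hr : 2 ≤ r) (M : ℕ) :
    r * ((r * r) ^ 4 ^ M + 1) ≤ r ^ 4 ^ (M + 1) := by
  have hpos : 0 < (r * r) ^ 4 ^ M := by positivity
  calc
    r * ((r * r) ^ 4 ^ M + 1) ≤ r * (r * (r * r) ^ 4 ^ M) := by gcongr; nlinarith
    _ = r ^ (2 + 2 * 4 ^ M) := by rw [← pow_two, ← pow_mul, pow_add]; ring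
    _ ≤ r ^ 4 ^ (M + 1) := by
      have : 0 < 4 ^ M := by positivity
      exact Nat.pow_le_pow_right (by omega) (by rw [pow_succ]; omega)

-- With `a` the minimum, the recursion controls the colours of `T` and `insert a T` at once, so the
-- number of colours is squared at every step.
theorem exists_isEndHomogeneous [Fintype C] [Nontrivial C] (f : Finset α → C) {A : Finset α}
    {M : ℕ} (hA : Fintype.card C ^ 4 ^ M ≤ #A) :
    ∃ H ⊆ A, #H = M ∧ ∃ g, IsEndHomogeneous f g H := by
  classical
  induction M generalizing C A with
  | zero => exact ⟨∅, empty_subset A, card_empty, f, fun _ _ x hx ↦ absurd hx (notMem_empty x)⟩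
  | succ M ih =>
    have one_lt_card : 1 < Fintype.card C := Fintype.one_lt_card
    obtain ⟨c, -, hc⟩ := exists_le_card_fiber_of_mul_le_card_of_maps_to
      (f := fun x ↦ f {x}) (fun x _ ↦ mem_univ _) univ_nonempty
      ((mul_succ_le_pow_four_pow_succ one_lt_card M).trans hA)
    set B := A.filter fun x ↦ f {x} = c
    have hB : B.Nonempty := card_pos.1 (by omega)
    set a := B.min' hB
    have ha : a ∈ B := B.min'_mem hB
    obtain ⟨H, hHB, hHcard, g, hg⟩ := ih (fun T ↦ (f T, f (insert a T))) (A := B.erase a)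
      (by rw [Fintype.card_prod, card_erase_of_mem ha]; omega)
    have insert_subset_B : insert a H ⊆ B :=
      insert_subset ha (hHB.trans (erase_subset a B))
    refine ⟨insert a H, insert_subset_B.trans (filter_subset _ A), ?_, ?_⟩
    · rw [card_insert_of_notMem fun h ↦ notMem_erase a B (hHB h), hHcard]
    · exact hg.exists_insert_min (fun x hx ↦ B.min'_lt_of_mem_erase_min' hB (hHB hx))
        fun x hx ↦ (mem_filter.1 (insert_subset_B hx)).2

theorem exists_homogeneous_finset [Fintype C] [Nontrivial C] {k m : ℕ} (f : Finset α → C)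
    {A : Finset α} (hm : Fintype.card C ≤ m) (hA : tower (4 * k + 1) m ≤ #A) :
    ∃ H ⊆ A, #H = m ∧ ∃ c, ∀ s ⊆ H, #s = k → f s = c := by
  induction k generalizing f A with
  | zero =>
    obtain ⟨H, hHA, hH⟩ := exists_subset_card_eq hA
    exact ⟨H, hHA, hH, f ∅, fun s _ hs ↦ by rw [card_eq_zero.1 hs]⟩
  | succ k ih =>
    have card_le : Fintype.card C ^ 4 ^ tower (4 * k + 1) m ≤ #A := calc
      _ ≤ tower 5 (tower (4 * k + 1) m) :=
        pow_four_pow_le_tower_five Fintype.one_lt_card (hm.trans (le_tower _ m))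
      _ = tower (4 * (k + 1) + 1) m := by rw [tower_tower]; congr 1; ring
      _ ≤ #A := hA
    obtain ⟨B, hBA, hB, g, hg⟩ := exists_isEndHomogeneous f card_le
    obtain ⟨H, hHB, hH, c, hc⟩ := ih g hB.ge
    refine ⟨H, hHB.trans hBA, hH, c, fun s hs hsk ↦ ?_⟩
    have hne : s.Nonempty := card_pos.1 (by omega)
    have hmax := s.max'_mem hne
    calc
      f s = f (insert (s.max' hne) (s.erase (s.max' hne))) := by rw [insert_erase hmax]
      _ = g (s.erase (s.max' hne)) := hg _ ((erase_subset _ s).trans (hs.trans hHB)) _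
        (hHB (hs hmax)) fun t ht ↦ s.lt_max'_of_mem_erase_max' hne ht
      _ = c := hc _ ((erase_subset _ s).trans hs) (by rw [card_erase_of_mem hmax, hsk]; rfl)

theorem exists_strictMono_forall_comp_eq [Fintype α] [Fintype C] [Nontrivial C] {k m : ℕ}
    (f : (Fin k → α) → C) (hm : Fintype.card C ≤ m)
    (hα : tower (4 * k + 1) m ≤ Fintype.card α) :
    ∃ e : Fin m → α, StrictMono e ∧ ∃ c, ∀ ι : Fin k → Fin m, StrictMono ι → f (e ∘ ι) = c := by
  classical
  let colour (s : Finset α) : C :=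
    if hs : #s = k then f (s.orderEmbOfFin hs) else Classical.arbitrary C
  obtain ⟨H, -, hH, c, hc⟩ := exists_homogeneous_finset (A := univ) colour hm hα
  set e := H.orderEmbOfFin hH
  refine ⟨e, e.strictMono, c, fun ι hι ↦ ?_⟩
  have eι_strictMono : StrictMono (e ∘ ι) := e.strictMono.comp hι
  have card_image : #(univ.image (e ∘ ι)) = k := by
    rw [card_image_of_injective _ eι_strictMono.injective, card_univ, Fintype.card_fin]
  have image_subset : univ.image (e ∘ ι) ⊆ H :=
    image_subset_iff.2 fun i _ ↦ H.orderEmbOfFin_mem hH (ι i)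
  calc
    f (e ∘ ι) = f ((univ.image (e ∘ ι)).orderEmbOfFin card_image) := congrArg f <|
      orderEmbOfFin_unique card_image (fun i ↦ mem_image_of_mem _ (mem_univ i)) eι_strictMono
    _ = colour (univ.image (e ∘ ι)) := by simp only [colour, dif_pos card_image]
    _ = c := hc _ image_subset card_image

theorem exists_strictMono_forall_comp_or_forall_not_comp [Fintype α] {κ : Type*} [Fintype κ]
    [Nonempty κ] {k m : ℕ} (R : κ → (Fin k → α) → Prop) (hm : Fintype.card κ + 1 ≤ m)
    (hα : tower (4 * k + 1) m ≤ Fintype.card α) :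
    ∃ e : Fin m → α, StrictMono e ∧
      ((∃ c, ∀ ι : Fin k → Fin m, StrictMono ι → R c (e ∘ ι)) ∨
        ∀ c, ∀ ι : Fin k → Fin m, StrictMono ι → ¬ R c (e ∘ ι)) := by
  classical
  let colour (x : Fin k → α) : Option κ := if h : ∃ c, R c x then some h.choose else none
  obtain ⟨e, he, c, hc⟩ := exists_strictMono_forall_comp_eq colour
    (by rwa [Fintype.card_option]) hα
  refine ⟨e, he, ?_⟩
  cases c with
  | none =>
    exact .inr fun c ι hι hR ↦ Option.some_ne_none _ ((dif_pos ⟨c, hR⟩).symm.trans (hc ι hι))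
  | some c =>
    refine .inl ⟨c, fun ι hι ↦ ?_⟩
    obtain ⟨hR, choose_eq⟩ := Option.dite_none_right_eq_some.1 (hc ι hι)
    exact Option.some.inj choose_eq ▸ hR.choose_spec

end Ramsey

section ChordlessPath

variable {V : Type*} {G : SimpleGraph V} {n : ℕ} {u v : V}

theorem hasChordlessPath_iff_pathGraph_isIndContained :
    HasChordlessPath G n ↔ pathGraph n ⊴ G := by
  constructor
  · rintro ⟨v, hv, hadj⟩
    exact ⟨⟨⟨v, hv⟩, fun {i j} ↦ (hadj i j).trans pathGraph_adj.symm⟩⟩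
  · rintro ⟨f⟩
    exact ⟨f, f.injective, fun i j ↦ f.map_adj_iff.trans pathGraph_adj⟩

theorem dist_getVert_of_length_eq_dist {p : G.Walk u v} (hp : p.length = G.dist u v) {i j : ℕ}
    (hij : i ≤ j) (hj : j ≤ p.length) : G.dist (p.getVert i) (p.getVert j) = j - i := by
  have subwalk := (Walk.isSubwalk_drop (p.take j) i).trans (p.isSubwalk_take j)
  have length_eq := length_eq_dist_of_subwalk hp subwalk
  rw [Walk.drop_length, Walk.take_length, Walk.take_getVert, min_eq_left hj,
    min_eq_right hij] at length_eq
  exact length_eq.symm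

theorem pathGraph_isIndContained_of_length_eq_dist {p : G.Walk u v}
    (hp : p.length = G.dist u v) (hn : n ≤ p.length + 1) : pathGraph n ⊴ G := by
  have dist_eq (i j : Fin n) :
      G.dist (p.getVert i) (p.getVert j) = max (i : ℕ) j - min (i : ℕ) j := by
    rcases le_total (i : ℕ) j with hij | hji
    · rw [dist_getVert_of_length_eq_dist hp hij (by omega), max_eq_right hij, min_eq_left hij]
    · rw [dist_comm, dist_getVert_of_length_eq_dist hp hji (by omega), max_eq_left hji,
        min_eq_right hji]
  refine ⟨⟨⟨fun i ↦ p.getVert i, fun i j hij ↦ Fin.ext ?_⟩, fun {i j} ↦ ?_⟩⟩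
  · have dist_eq_zero := dist_eq i j
    rw [show p.getVert i = p.getVert j from hij, dist_self] at dist_eq_zero
    omega
  · change G.Adj (p.getVert i) (p.getVert j) ↔ _
    rw [← dist_eq_one_iff_adj, dist_eq, pathGraph_adj]
    omega

theorem exists_short_walk_support_subset (hG : ¬ pathGraph n ⊴ G) (w : G.Walk u v) :
    ∃ p : G.Walk u v, p.length + 1 < n ∧ p.support ⊆ w.support := by
  obtain ⟨q, hq⟩ :=
    (w.induce {x | x ∈ w.support} fun _ hx ↦ hx).reachable.exists_walk_length_eq_dist
  have length_lt : q.length + 1 < n := by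
    by_contra! hn
    exact hG ((pathGraph_isIndContained_of_length_eq_dist hq hn).trans ⟨Embedding.induce _⟩)
  refine ⟨q.map (Embedding.induce _).toHom, (Walk.length_map _ q).symm ▸ length_lt,
    fun x hx ↦ ?_⟩
  obtain ⟨y, -, rfl⟩ := List.mem_map.1 (Walk.support_map _ q ▸ hx)
  exact y.2

end ChordlessPath

section SeparatedWalks

variable {V : Type*} {G : SimpleGraph V} {k : ℕ}

theorem exists_walk_forall_mem_support_exists {e : Fin (k + 2) → V}
    (w : ∀ i : Fin (k + 1), G.Walk (e i.castSucc) (e i.succ)) (j : Fin (k + 2)) :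
    ∃ p : G.Walk (e 0) (e j), ∀ x ∈ p.support, ∃ i, x ∈ (w i).support := by
  induction j using Fin.induction with
  | zero =>
    refine ⟨.nil, fun x hx ↦ ⟨0, ?_⟩⟩
    rw [Walk.mem_support_nil_iff.1 hx]
    exact (w 0).start_mem_support
  | succ i ih =>
    obtain ⟨p, hp⟩ := ih
    refine ⟨p.append (w i), fun x hx ↦ ?_⟩
    exact ((Walk.mem_support_append_iff p (w i)).1 hx).elim (hp x) fun hxi ↦ ⟨i, hxi⟩

theorem exists_mem_layer_le_add_length {U : Fin k → Set V}
    (hU : ∀ i j : Fin k, (i : ℕ) + 1 < j → ∀ x ∈ U i, ∀ y ∈ U j, ¬ G.Adj x y) {u v : V}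
    (p : G.Walk u v) (hp : ∀ x ∈ p.support, ∃ i, x ∈ U i) {i : Fin k} (hu : u ∈ U i) :
    ∃ j : Fin k, v ∈ U j ∧ (j : ℕ) ≤ i + p.length := by
  induction p generalizing i with
  | nil => exact ⟨i, hu, Nat.le_add_right _ _⟩
  | @cons u x v hux p ih =>
    obtain ⟨j, hxj⟩ := hp x (by simp)
    have hji : (j : ℕ) ≤ i + 1 := by
      by_contra! hij
      exact hU i j hij u hu x hxj hux
    obtain ⟨l, hvl, hl⟩ := ih (fun y hy ↦ hp y (List.mem_cons_of_mem u hy)) hxj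
    exact ⟨l, hvl, by rw [Walk.length_cons]; omega⟩

theorem pathGraph_isIndContained_of_separated_walks [LinearOrder V] {n : ℕ} {e : Fin (k + 2) → V}
    (he : StrictMono e) (w : ∀ i : Fin (k + 1), G.Walk (e i.castSucc) (e i.succ))
    (hw : ∀ i, ∀ x ∈ (w i).support, x ≤ e i.succ)
    (hsep : ∀ i j : Fin (k + 1), (i : ℕ) + 1 < j →
      ∀ x ∈ (w i).support, ∀ y ∈ (w j).support, ¬ G.Adj x y)
    (hn : n ≤ k + 1) : pathGraph n ⊴ G := by
  by_contra hG
  obtain ⟨q, hq⟩ := exists_walk_forall_mem_support_exists w (Fin.last (k + 1))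
  obtain ⟨p, hpn, hpq⟩ := exists_short_walk_support_subset hG q
  obtain ⟨j, hj, hjp⟩ := exists_mem_layer_le_add_length (U := fun i ↦ {x | x ∈ (w i).support})
    hsep p (fun x hx ↦ hq x (hpq hx)) (i := 0) (w 0).start_mem_support
  have last_le : Fin.last (k + 1) ≤ j.succ := he.le_iff_le.1 (hw j _ hj)
  rw [Fin.le_def, Fin.val_last, Fin.val_succ] at last_le
  rw [Fin.val_zero] at hjp
  omega

end SeparatedWalks

section CompleteBipartite

theorem containsCopy_iff_isContained {V W : Type*} {G : SimpleGraph V} {H : SimpleGraph W} :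
    ContainsCopy G H ↔ H ⊑ G := by
  constructor
  · rintro ⟨g, hg, hadj⟩
    exact ⟨⟨⟨g, hadj _ _⟩, hg⟩⟩
  · rintro ⟨f⟩
    exact ⟨f, f.injective, fun _ _ ↦ f.toHom.map_adj⟩

theorem completeBipartiteGraph_two_two_isContained {V : Type*} {G : SimpleGraph V}
    {a b c d : V} (hab : a ≠ b) (hcd : c ≠ d) (hac : G.Adj a c) (had : G.Adj a d)
    (hbc : G.Adj b c) (hbd : G.Adj b d) : completeBipartiteGraph (Fin 2) (Fin 2) ⊑ G := by
  classical
  refine completeBipartiteGraph_isContained_iff.2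
    ⟨{a, b}, {c, d}, card_pair hab, card_pair hcd, ?_⟩
  simp [IsCompleteBetween, hac, had, hbc, hbd]

theorem completeBipartiteGraph_two_two_isContained_of_forall_strictMono {α : Type*}
    [LinearOrder α] {G : SimpleGraph α} {e : Fin 8 → α} (he : StrictMono e) {x y : α → α → α}
    (hx : ∀ a b, x a b ∈ Set.uIcc a b) (hy : ∀ a b, y a b ∈ Set.uIcc a b)
    (hadj : ∀ ι : Fin 4 → Fin 8, StrictMono ι →
      G.Adj (x (e (ι 0)) (e (ι 1))) (y (e (ι 2)) (e (ι 3)))) :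
    completeBipartiteGraph (Fin 2) (Fin 2) ⊑ G := by
  have ne_of_mem_uIcc {z : α → α → α} (hz : ∀ a b, z a b ∈ Set.uIcc a b) {i j k l : Fin 8}
      (hij : i ≤ j) (hjk : j < k) (hkl : k ≤ l) : z (e i) (e j) ≠ z (e k) (e l) := by
    have left_mem := hz (e i) (e j)
    have right_mem := hz (e k) (e l)
    rw [Set.uIcc_of_le (he.monotone hij)] at left_mem
    rw [Set.uIcc_of_le (he.monotone hkl)] at right_mem
    exact (left_mem.2.trans_lt ((he hjk).trans_le right_mem.1)).ne
  exact completeBipartiteGraph_two_two_isContained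
    (ne_of_mem_uIcc hx (i := 0) (j := 1) (k := 2) (l := 3) (by decide) (by decide) (by decide))
    (ne_of_mem_uIcc hy (i := 4) (j := 5) (k := 6) (l := 7) (by decide) (by decide) (by decide))
    (hadj ![0, 1, 4, 5] (by decide)) (hadj ![0, 1, 6, 7] (by decide))
    (hadj ![2, 3, 4, 5] (by decide)) (hadj ![2, 3, 6, 7] (by decide))

end CompleteBipartite

section IntervalConnected

variable {α : Type*} [LinearOrder α]

/-- Every interval of `α` induces a connected subgraph of `G`: any two vertices are joined by a
walk that stays between them. -/
def IntervalConnected (G : SimpleGraph α) : Prop :=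
  ∀ a b, ∃ p : G.Walk a b, ∀ x ∈ p.support, x ∈ Set.uIcc a b

theorem IntervalConnected.mono {G H : SimpleGraph α} (hGH : G ≤ H) (hG : IntervalConnected G) :
    IntervalConnected H := fun a b ↦ by
  obtain ⟨p, hp⟩ := hG a b
  exact ⟨p.mapLe hGH, by rwa [Walk.support_mapLe_eq_support]⟩

theorem exists_hasse_walk_forall_mem_Icc [SuccOrder α] [IsSuccArchimedean α] {a b : α}
    (hab : a ≤ b) : ∃ p : (hasse α).Walk a b, ∀ x ∈ p.support, x ∈ Set.Icc a b := by
  induction hab using Succ.rec with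
  | rfl => exact ⟨.nil, by simp⟩
  | succ b hab ih =>
    obtain ⟨p, hp⟩ := ih
    by_cases hb : IsMax b
    · rw [Order.succ_eq_iff_isMax.2 hb]
      exact ⟨p, hp⟩
    have adj_succ : (hasse α).Adj b (Order.succ b) := .inl (Order.covBy_succ_of_not_isMax hb)
    refine ⟨p.concat adj_succ, fun x hx ↦ ?_⟩
    rw [Walk.support_concat, List.mem_append, List.mem_singleton] at hx
    rcases hx with hx | rfl
    · exact Set.Icc_subset_Icc_right (Order.le_succ b) (hp x hx)
    · exact ⟨hab.trans (Order.le_succ b), le_rfl⟩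

theorem intervalConnected_hasse [SuccOrder α] [IsSuccArchimedean α] :
    IntervalConnected (hasse α) := by
  intro a b
  rcases le_total a b with hab | hba
  · obtain ⟨p, hp⟩ := exists_hasse_walk_forall_mem_Icc hab
    exact ⟨p, by rwa [Set.uIcc_of_le hab]⟩
  · obtain ⟨p, hp⟩ := exists_hasse_walk_forall_mem_Icc hba
    refine ⟨p.reverse, fun x hx ↦ ?_⟩
    rw [Set.uIcc_of_ge hba]
    exact hp x (by simpa using hx)

theorem IntervalConnected.exists_short_walk {G : SimpleGraph α} (hG : IntervalConnected G)
    {n : ℕ} (hn : ¬ pathGraph n ⊴ G) (a b : α) :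
    ∃ p : G.Walk a b, p.length + 1 < n ∧ ∀ x ∈ p.support, x ∈ Set.uIcc a b := by
  obtain ⟨w, hw⟩ := hG a b
  obtain ⟨p, hpn, hpw⟩ := exists_short_walk_support_subset hn w
  exact ⟨p, hpn, fun x hx ↦ hw x (hpw hx)⟩

theorem IntervalConnected.isContained_or_isIndContained [Fintype α] {G : SimpleGraph α}
    (hG : IntervalConnected G) {n : ℕ} (hn : 2 ≤ n)
    (hα : tower 17 (n ^ 2 + 4) ≤ Fintype.card α) :
    completeBipartiteGraph (Fin 2) (Fin 2) ⊑ G ∨ pathGraph n ⊴ G := by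
  refine or_iff_not_imp_right.2 fun no_path ↦ ?_
  choose w hwn hw using hG.exists_short_walk no_path
  have : NeZero n := ⟨by omega⟩
  obtain ⟨e, he, ⟨⟨s, t⟩, hadj⟩ | hsep⟩ :=
    exists_strictMono_forall_comp_or_forall_not_comp (k := 4) (m := n ^ 2 + 4)
      (fun (st : Fin n × Fin n) (x : Fin 4 → α) ↦
        G.Adj ((w (x 0) (x 1)).getVert st.1) ((w (x 2) (x 3)).getVert st.2))
      (by simp [pow_two]) hα
  · have castLE_strictMono := Fin.strictMono_castLE (show 8 ≤ n ^ 2 + 4 by nlinarith)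
    exact completeBipartiteGraph_two_two_isContained_of_forall_strictMono
      (he.comp castLE_strictMono)
      (fun a b ↦ hw a b _ (Walk.getVert_mem_support _ s))
      (fun a b ↦ hw a b _ (Walk.getVert_mem_support _ t))
      fun ι hι ↦ hadj _ (castLE_strictMono.comp hι)
  · refine absurd (pathGraph_isIndContained_of_separated_walks (k := n ^ 2 + 2) he
      (fun i ↦ w (e i.castSucc) (e i.succ)) (fun i x hx ↦ ?_) (fun i j hij x hx y hy ↦ ?_)
      (by nlinarith)) no_path
    · have mem_uIcc := hw _ _ x hx
      rw [Set.uIcc_of_le (he i.castSucc_lt_succ).le] at mem_uIcc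
      exact mem_uIcc.2
    · obtain ⟨s, rfl, hs⟩ := Walk.mem_support_iff_exists_getVert.1 hx
      obtain ⟨t, rfl, ht⟩ := Walk.mem_support_iff_exists_getVert.1 hy
      have hsn := hwn (e i.castSucc) (e i.succ)
      have htn := hwn (e j.castSucc) (e j.succ)
      exact hsep (⟨s, by omega⟩, ⟨t, by omega⟩) ![i.castSucc, i.succ, j.castSucc, j.succ]
        (by simp [Fin.lt_def, hij])

end IntervalConnected

theorem finite_traceable_K22_or_chordless_tower_bound_general {V : Type*} {G : SimpleGraph V}
    {n N : ℕ} (hn : 2 ≤ n) (hN : tower 17 (n ^ 2 + 4) ≤ N) (hG : pathGraph N ⊑ G) :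
    ContainsCopy G (completeBipartiteGraph (Fin 2) (Fin 2)) ∨ HasChordlessPath G n := by
  obtain ⟨f, hf⟩ := isContained_iff_exists_le_comap.1 hG
  have comap_intervalConnected : IntervalConnected (G.comap f) := intervalConnected_hasse.mono hf
  have comap_embedding : G.comap f ↪g G := .comap f G
  rw [containsCopy_iff_isContained, hasChordlessPath_iff_pathGraph_isIndContained]
  exact (comap_intervalConnected.isContained_or_isIndContained hn (by rwa [Fintype.card_fin])).imp
    (·.trans comap_embedding.isContained) (·.trans comap_embedding.isIndContained)

theorem FinTraceable.pathGraph_isContained {V : Type*} [Fintype V] {G : SimpleGraph V}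
    (hG : FinTraceable G) : pathGraph (Fintype.card V) ⊑ G := by
  obtain ⟨T, hT⟩ := hG
  refine isContained_iff_exists_le_comap.2 ⟨T.toEmbedding, fun i j hij ↦ ?_⟩
  obtain ⟨i, hi⟩ := i
  obtain ⟨j, hj⟩ := j
  rcases pathGraph_adj.1 hij with rfl | rfl
  · exact hT i hj
  · exact (hT j hi).symm

/-- There is a constant `c > 0` such that for every `n ≥ 2`, every finite traceable
graph with at least `t_{c⌈log₂ n⌉}(2)` vertices contains a copy of `K_{2,2}` or a
chordless `n`-path. -/
theorem finite_traceable_K22_or_chordless_tower_bound :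
    ∃ c : ℕ, 0 < c ∧ ∀ n : ℕ, 2 ≤ n →
      ∀ (V : Type) [Fintype V] (G : SimpleGraph V),
        tower (c * Nat.clog 2 n) 2 ≤ Fintype.card V → FinTraceable G →
        ContainsCopy G (completeBipartiteGraph (Fin 2) (Fin 2)) ∨ HasChordlessPath G n := by
  exact ⟨20, by norm_num, fun n hn V _ G hcard hG ↦
    finite_traceable_K22_or_chordless_tower_bound_general hn
      ((tower_seventeen_le_tower_clog hn).trans hcard) hG.pathGraph_isContained⟩
end

section
/- Let L be a finitely generated infinite lattice of length 3. Then there exists an injective sequence f : ℕ → L such that f(n) ∉ {0_L, 1_L} for every n, f(n) and f(n+1) are comparable for every n, and the terms alternate between atoms and coatoms (i.e., either f(2n) is an atom and f(2n+1) is a coatom for all n, or f(2n) is a coatom and f(2n+1) is an atom for all n). -/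
/-- The generated sets: `latGen S 0 = S` and `latGen S (n+1)` is the set of all meets
and joins of pairs of elements of `latGen S n`. -/
def latGen {L : Type*} [Lattice L] (S : Set L) : ℕ → Set L
  | 0 => S
  | n + 1 => {z | ∃ x ∈ latGen S n, ∃ y ∈ latGen S n, z = x ⊓ y ∨ z = x ⊔ y}

/-- A lattice is finitely generated if some finite subset generates every element via
iterated meets and joins. -/
def LatticeFG (L : Type*) [Lattice L] : Prop :=
  ∃ S : Set L, S.Finite ∧ ∀ x : L, ∃ n : ℕ, x ∈ latGen S n

/-!
Let `S` be a finite generating set and call the elements of `latGen S (n + 1) \ latGen S n` the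
`n`-th layer. Every layer is finite, and nonempty because `L` is infinite. An element of layer
`n + 1` is a meet or join of two elements of `latGen S (n + 1)`, not both of which lie in
`latGen S n`; hence it is comparable to an element of layer `n`. Kőnig's lemma threads a sequence
through the layers; it is injective because the layers are disjoint, and starting it late enough
avoids `⊥` and `⊤`. In length 3 two distinct comparable elements other than `⊥` and `⊤` are an atom
and a coatom.
-/

section Konig

open CategoryTheory

/-- Kőnig's lemma: once a parent is chosen for every element, the sets `T n` form an inverse system
of nonempty finite sets, so its limit is nonempty. -/
theorem exists_seq_forall_mem_of_forall_exists_rel {α : Type*} {T : ℕ → Set α} {R : α → α → Prop}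
    (hfin : ∀ n, (T n).Finite) (hne : ∀ n, (T n).Nonempty)
    (hR : ∀ n, ∀ y ∈ T (n + 1), ∃ x ∈ T n, R x y) :
    ∃ f : ℕ → α, (∀ n, f n ∈ T n) ∧ ∀ n, R (f n) (f (n + 1)) := by
  choose! parent parent_mem parent_rel using hR
  let toParent (n : ℕ) : T (n + 1) → T n := fun y => ⟨parent n y, parent_mem n y y.2⟩
  let F : ℕᵒᵖ ⥤ Type _ := Functor.ofOpSequence (X := fun n => T n) fun n => ↾(toParent n)
  have : ∀ n, Finite (F.obj n) := fun n => hfin n.unop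
  have : ∀ n, Nonempty (F.obj n) := fun n => (hne n.unop).to_subtype
  obtain ⟨u, hu⟩ := nonempty_sections_of_finite_inverse_system F
  let f (n : ℕ) : T n := u ⟨n⟩
  have toParent_f (n : ℕ) : toParent n (f (n + 1)) = f n := by
    have hmap := hu (homOfLE (Nat.le_add_right n 1)).op
    rwa [Functor.ofOpSequence_map_homOfLE_succ] at hmap
  refine ⟨fun n => f n, fun n => (f n).2, fun n => ?_⟩
  have hrel := parent_rel n (f (n + 1)) (f (n + 1)).2
  rwa [show parent n (f (n + 1)) = f n from congrArg Subtype.val (toParent_f n)] at hrel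

end Konig

section Layers

variable {L : Type*} [Lattice L] {S : Set L}

theorem latGen_mono (S : Set L) : Monotone (latGen S) :=
  monotone_nat_of_le_succ fun _ x hx => ⟨x, hx, x, hx, Or.inl (inf_idem x).symm⟩

theorem latGen_finite (hS : S.Finite) (n : ℕ) : (latGen S n).Finite := by
  induction n with
  | zero => exact hS
  | succ n ih =>
    refine ((ih.image2 (· ⊓ ·) ih).union (ih.image2 (· ⊔ ·) ih)).subset ?_
    rintro z ⟨x, hx, y, hy, rfl | rfl⟩
    · exact Or.inl ⟨x, hx, y, hy, rfl⟩
    · exact Or.inr ⟨x, hx, y, hy, rfl⟩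

theorem latGen_subset_of_succ_subset {n : ℕ} (h : latGen S (n + 1) ⊆ latGen S n) (m : ℕ) :
    latGen S m ⊆ latGen S n := by
  induction m with
  | zero => exact latGen_mono S (Nat.zero_le n)
  | succ m ih =>
    rintro z ⟨x, hx, y, hy, hz⟩
    exact h ⟨x, ih hx, y, ih hy, hz⟩

theorem exists_subset_latGen (hgen : ∀ x, ∃ n, x ∈ latGen S n) {F : Set L} (hF : F.Finite) :
    ∃ n, F ⊆ latGen S n := by
  have eventually_mem (x : L) : ∀ᶠ n in Filter.atTop, x ∈ latGen S n := by
    obtain ⟨n, hn⟩ := hgen x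
    exact Filter.eventually_atTop.2 ⟨n, fun m hnm => latGen_mono S hnm hn⟩
  exact ((Filter.eventually_all_finite hF).2 fun x _ => eventually_mem x).exists

/-- The `n`-th layer of the lattice generated by `S`: the elements that appear for the first time
after `n + 1` rounds of taking meets and joins. The generators themselves belong to no layer. -/
def latGenLayer (S : Set L) (n : ℕ) : Set L :=
  latGen S (n + 1) \ latGen S n

theorem latGenLayer_finite (hS : S.Finite) (n : ℕ) : (latGenLayer S n).Finite :=
  (latGen_finite hS (n + 1)).sdiff

theorem latGenLayer_nonempty [Infinite L] (hS : S.Finite) (hgen : ∀ x, ∃ n, x ∈ latGen S n)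
    (n : ℕ) : (latGenLayer S n).Nonempty := by
  refine Set.sdiff_nonempty.2 fun hstable => Set.infinite_univ ((latGen_finite hS n).subset ?_)
  intro x _
  obtain ⟨m, hm⟩ := hgen x
  exact latGen_subset_of_succ_subset hstable m hm

theorem latGenLayer_disjoint {m n : ℕ} (h : m < n) :
    Disjoint (latGenLayer S m) (latGenLayer S n) :=
  Set.disjoint_left.2 fun _ hm hn => hn.2 (latGen_mono S h hm.1)

theorem exists_mem_latGenLayer_le_or_ge {n : ℕ} {z : L} (hz : z ∈ latGenLayer S (n + 1)) :
    ∃ x ∈ latGenLayer S n, x ≤ z ∨ z ≤ x := by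
  obtain ⟨⟨x, hx, y, hy, hxy⟩, hz_new⟩ := hz
  have x_or_y_new : x ∉ latGen S n ∨ y ∉ latGen S n := by
    by_contra! hold
    exact hz_new ⟨x, hold.1, y, hold.2, hxy⟩
  rcases x_or_y_new with hx_new | hy_new
  · refine ⟨x, ⟨hx, hx_new⟩, ?_⟩
    rcases hxy with rfl | rfl
    exacts [Or.inr inf_le_left, Or.inl le_sup_left]
  · refine ⟨y, ⟨hy, hy_new⟩, ?_⟩
    rcases hxy with rfl | rfl
    exacts [Or.inr inf_le_right, Or.inl le_sup_right]

theorem LatticeFG.exists_injective_seq_le_or_ge [Infinite L] (hfg : LatticeFG L) {F : Set L}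
    (hF : F.Finite) :
    ∃ f : ℕ → L, Function.Injective f ∧ (∀ n, f n ∉ F) ∧
      ∀ n, f n ≤ f (n + 1) ∨ f (n + 1) ≤ f n := by
  obtain ⟨S, hS, hgen⟩ := hfg
  obtain ⟨N, hN⟩ := exists_subset_latGen hgen hF
  obtain ⟨f, f_mem, f_comparable⟩ :=
    exists_seq_forall_mem_of_forall_exists_rel (T := fun n => latGenLayer S (N + n))
      (fun n => latGenLayer_finite hS (N + n)) (fun n => latGenLayer_nonempty hS hgen (N + n))
      fun n _ hz => exists_mem_latGenLayer_le_or_ge hz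
  refine ⟨f, Function.Injective.of_lt_imp_ne fun m n hmn => ?_, fun n hn => ?_, f_comparable⟩
  · exact (latGenLayer_disjoint (Nat.add_lt_add_left hmn N)).ne_of_mem (f_mem m) (f_mem n)
  · exact (f_mem n).2 (latGen_mono S (Nat.le_add_right N n) (hN hn))

end Layers

section LengthThree

variable {P : Type*} [PartialOrder P] [BoundedOrder P]

theorem isCoatom_of_isAtom_of_le_or_ge {x y : P} (hx : IsAtom x) (hy : IsAtom y ∨ IsCoatom y)
    (hy_bot : y ≠ ⊥) (hne : x ≠ y) (hxy : x ≤ y ∨ y ≤ x) : IsCoatom y := by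
  have x_lt_y : x < y := (hxy.resolve_right fun hyx =>
    hy_bot (hx.2 y (hyx.lt_of_ne hne.symm))).lt_of_ne hne
  exact hy.resolve_left fun hy_atom => hx.1 (hy_atom.2 x x_lt_y)

theorem isAtom_of_isCoatom_of_le_or_ge {x y : P} (hx : IsCoatom x) (hy : IsAtom y ∨ IsCoatom y)
    (hy_top : y ≠ ⊤) (hne : x ≠ y) (hxy : x ≤ y ∨ y ≤ x) : IsAtom y :=
  isCoatom_dual_iff_isAtom.1 <|
    isCoatom_of_isAtom_of_le_or_ge hx.dual (hy.symm.imp IsCoatom.dual IsAtom.dual)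
      hy_top hne hxy.symm

end LengthThree

theorem forall_even_and_odd_of_forall_imp_succ (p q : ℕ → Prop)
    (hpq : ∀ n, p n → q (n + 1)) (hqp : ∀ n, q n → p (n + 1)) (h0 : p 0) (n : ℕ) :
    p (2 * n) ∧ q (2 * n + 1) := by
  have even (n : ℕ) : p (2 * n) := by
    induction n with
    | zero => exact h0
    | succ n ih => exact hqp _ (hpq _ ih)
  exact ⟨even n, hpq _ (even n)⟩

/-- In a finitely generated infinite lattice of length 3 there is an injective
sequence avoiding `⊥` and `⊤`, with consecutive terms comparable, whose terms
alternate between atoms and coatoms. -/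
theorem fg_infinite_length_three_lattice_alternating_sequence {L : Type*} [Lattice L]
    [BoundedOrder L] [Infinite L] (hbot_top : (⊥ : L) ≠ ⊤)
    (hlen : ∀ z : L, z ≠ ⊥ → z ≠ ⊤ → IsAtom z ∨ IsCoatom z)
    (hfg : LatticeFG L) :
    ∃ f : ℕ → L, Function.Injective f ∧
      (∀ n : ℕ, f n ≠ ⊥ ∧ f n ≠ ⊤) ∧
      (∀ n : ℕ, f n ≤ f (n + 1) ∨ f (n + 1) ≤ f n) ∧
      ((∀ n : ℕ, IsAtom (f (2 * n)) ∧ IsCoatom (f (2 * n + 1))) ∨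
       (∀ n : ℕ, IsCoatom (f (2 * n)) ∧ IsAtom (f (2 * n + 1)))) := by
  obtain ⟨f, f_inj, f_proper, f_comparable⟩ :=
    hfg.exists_injective_seq_le_or_ge (Set.toFinite {⊥, ⊤})
  have ne_bot (n : ℕ) : f n ≠ ⊥ := fun h => f_proper n (Or.inl h)
  have ne_top (n : ℕ) : f n ≠ ⊤ := fun h => f_proper n (Or.inr h)
  have atom_or_coatom (n : ℕ) : IsAtom (f n) ∨ IsCoatom (f n) := hlen (f n) (ne_bot n) (ne_top n)
  have ne_succ (n : ℕ) : f n ≠ f (n + 1) := f_inj.ne n.lt_succ_self.ne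
  have coatom_succ (n : ℕ) (hn : IsAtom (f n)) : IsCoatom (f (n + 1)) :=
    isCoatom_of_isAtom_of_le_or_ge hn (atom_or_coatom _) (ne_bot _) (ne_succ n) (f_comparable n)
  have atom_succ (n : ℕ) (hn : IsCoatom (f n)) : IsAtom (f (n + 1)) :=
    isAtom_of_isCoatom_of_le_or_ge hn (atom_or_coatom _) (ne_top _) (ne_succ n) (f_comparable n)
  refine ⟨f, f_inj, fun n => ⟨ne_bot n, ne_top n⟩, f_comparable, ?_⟩
  rcases atom_or_coatom 0 with atom_zero | coatom_zero
  · exact Or.inl (forall_even_and_odd_of_forall_imp_succ (IsAtom <| f ·) (IsCoatom <| f ·)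
      coatom_succ atom_succ atom_zero)
  · exact Or.inr (forall_even_and_odd_of_forall_imp_succ (IsCoatom <| f ·) (IsAtom <| f ·)
      atom_succ coatom_succ coatom_zero)
end
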